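/- Let p be a strictly positive joint pmf on sequences x : Fin n → α (α a nonempty finite type, n ≥ 1), let T > 0, let b ∈ ℝ, and let b' : (i : Fin n) × (prefix of length i) → ℝ be any (finite-valued) baseline function on prefixes. Define w_T(x) = exp(((1-T)/T)·log p(x) - b) and the autoregressive LHTS loss over families q = (q_i(·|x_{<i}))_{i,prefix} of strictly positive conditional pmfs on α: L^{AR}(q) = -(1/n)·∑_{i} ∑_x p(x) · e^{-b'(i, x_{<i})} · w_T(x) · log q_i(x_i | x_{<i}). Then L^{AR} is a strictly proper loss: its unique global minimizer over such families is q_i(·|x_{<i}) = p_T(·|x_{<i}), the univariate conditionals of the temperature-scaled joint distribution p_T. -/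

import Mathlib

/-!
The weight that position `i` gives to a sequence `x` is a multiple of `p_T x` whose factor depends
on `x` only through the prefix `x_{<i}`, because `p x * w_T x = exp (-b) * p x ^ (1 / T)`. Such a
factor does not change the conditional law of the next token given the prefix. Hence the `i`-th
summand of the loss is, prefix by prefix, a positive multiple of the cross-entropy of
`q_i(·|x_{<i})` relative to `p_T(·|x_{<i})`, and Gibbs' inequality applies to every prefix
separately.
-/

open Finset Real InformationTheory

section Gibbs

variable {ι : Type*} [Fintype ι] {p q : ι → ℝ}

lemma mul_log_sub_mul_log_add_sub_eq_mul_klFun {x y : ℝ} (hx : 0 ≤ x) (hy : 0 < y) :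
    x * log x - x * log y + (y - x) = y * klFun (x / y) := by
  obtain rfl | hx := hx.eq_or_lt
  · simp [klFun_zero]
  · rw [klFun, log_div hx.ne' hy.ne']
    field_simp
    ring

lemma sum_mul_klFun_div_le (hp : ∀ i, 0 ≤ p i) (hq : ∀ i, 0 < q i) (hpq : ∑ i, q i ≤ ∑ i, p i) :
    ∑ i, q i * klFun (p i / q i) ≤ ∑ i, p i * log (p i) - ∑ i, p i * log (q i) := by
  simp_rw [← mul_log_sub_mul_log_add_sub_eq_mul_klFun (hp _) (hq _), sum_add_distrib,
    sum_sub_distrib]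
  linarith

lemma sum_mul_log_le_sum_mul_log_self (hp : ∀ i, 0 ≤ p i) (hq : ∀ i, 0 < q i)
    (hpq : ∑ i, q i ≤ ∑ i, p i) : ∑ i, p i * log (q i) ≤ ∑ i, p i * log (p i) := by
  have hnonneg : 0 ≤ ∑ i, q i * klFun (p i / q i) :=
    sum_nonneg fun i _ => mul_nonneg (hq i).le (klFun_nonneg (div_nonneg (hp i) (hq i).le))
  linarith [sum_mul_klFun_div_le hp hq hpq]

lemma sum_mul_log_eq_sum_mul_log_self_iff (hp : ∀ i, 0 ≤ p i) (hq : ∀ i, 0 < q i)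
    (hpq : ∑ i, q i ≤ ∑ i, p i) : ∑ i, p i * log (q i) = ∑ i, p i * log (p i) ↔ q = p := by
  refine ⟨fun h => funext fun i => ?_, by rintro rfl; rfl⟩
  have hdiv (j : ι) : 0 ≤ p j / q j := div_nonneg (hp j) (hq j).le
  have hnonneg (j : ι) : 0 ≤ q j * klFun (p j / q j) := mul_nonneg (hq j).le (klFun_nonneg (hdiv j))
  have hsum : ∑ j, q j * klFun (p j / q j) = 0 :=
    le_antisymm (by linarith [sum_mul_klFun_div_le hp hq hpq]) (sum_nonneg fun j _ => hnonneg j)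
  have hzero : q i * klFun (p i / q i) = 0 :=
    (sum_eq_zero_iff_of_nonneg fun j _ => hnonneg j).1 hsum i (mem_univ i)
  have hone : p i / q i = 1 :=
    (klFun_eq_zero_iff (hdiv i)).1 ((mul_eq_zero.1 hzero).resolve_left (hq i).ne')
  exact ((div_eq_one_iff_eq (hq i).ne').1 hone).symm

end Gibbs

section ConditionalMass

variable {X W A : Type*} [Fintype X] [DecidableEq W]

/-- The mass that the weights `m` give to the event `f = w`. -/
def marginalMass (f : X → W) (m : X → ℝ) (w : W) : ℝ :=
  ∑ x, if f x = w then m x else 0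

lemma marginalMass_nonneg {m : X → ℝ} (hm : ∀ x, 0 ≤ m x) (f : X → W) (w : W) :
    0 ≤ marginalMass f m w :=
  sum_nonneg fun x _ => ite_nonneg (hm x) le_rfl

lemma marginalMass_pos {f : X → W} {m : X → ℝ} (hm : ∀ x, 0 < m x) {w : W}
    (hw : w ∈ Set.range f) : 0 < marginalMass f m w := by
  obtain ⟨x, rfl⟩ := hw
  exact sum_pos' (fun y _ => ite_nonneg (hm y).le le_rfl) ⟨x, mem_univ x, by simpa using hm x⟩

lemma marginalMass_mul_comp (f : X → W) (m : X → ℝ) (c : W → ℝ) (w : W) :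
    marginalMass f (fun x => m x * c (f x)) w = marginalMass f m w * c w := by
  simp only [marginalMass, sum_mul, ite_mul, zero_mul]
  exact sum_congr rfl fun x _ => by split_ifs with h <;> simp [h]

variable [DecidableEq A]

/-- The mass that the weights `m` give to the event `f = w ∧ g = a`. -/
def jointMass (f : X → W) (g : X → A) (m : X → ℝ) (w : W) (a : A) : ℝ :=
  ∑ x, if f x = w ∧ g x = a then m x else 0

/-- The conditional law of `g` given `f = w` under the weights `m`, which need not be normalized.
It is `0` when the event `f = w` has mass `0`. -/
noncomputable def condMass (f : X → W) (g : X → A) (m : X → ℝ) (w : W) (a : A) : ℝ :=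
  jointMass f g m w a / marginalMass f m w

lemma jointMass_mul_comp (f : X → W) (g : X → A) (m : X → ℝ) (c : W → ℝ) (w : W) (a : A) :
    jointMass f g (fun x => m x * c (f x)) w a = jointMass f g m w a * c w := by
  simp only [jointMass, sum_mul, ite_mul, zero_mul]
  exact sum_congr rfl fun x _ => by split_ifs with h <;> simp [h]

lemma condMass_mul_comp (f : X → W) (g : X → A) (m : X → ℝ) {c : W → ℝ} {w : W} (hc : c w ≠ 0)
    (a : A) : condMass f g (fun x => m x * c (f x)) w a = condMass f g m w a := by
  rw [condMass, jointMass_mul_comp, marginalMass_mul_comp, mul_div_mul_right _ _ hc, condMass]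

lemma condMass_nonneg {m : X → ℝ} (hm : ∀ x, 0 ≤ m x) (f : X → W) (g : X → A) (w : W) (a : A) :
    0 ≤ condMass f g m w a :=
  div_nonneg (sum_nonneg fun x _ => ite_nonneg (hm x) le_rfl) (marginalMass_nonneg hm f w)

lemma marginalMass_mul_condMass {f : X → W} {m : X → ℝ} {w : W} (hw : marginalMass f m w ≠ 0)
    (g : X → A) (a : A) : marginalMass f m w * condMass f g m w a = jointMass f g m w a :=
  mul_div_cancel₀ _ hw

variable [Fintype A]

lemma sum_jointMass (f : X → W) (g : X → A) (m : X → ℝ) (w : W) :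
    ∑ a, jointMass f g m w a = marginalMass f m w := by
  simp only [jointMass, marginalMass, ite_and]
  rw [sum_comm]
  exact sum_congr rfl fun x _ => by split_ifs <;> simp

lemma sum_condMass {f : X → W} {m : X → ℝ} {w : W} (hw : marginalMass f m w ≠ 0) (g : X → A) :
    ∑ a, condMass f g m w a = 1 := by
  simp only [condMass]
  rw [← sum_div, sum_jointMass, div_self hw]

lemma sum_mul_comp_eq_sum_jointMass_mul [Fintype W] (f : X → W) (g : X → A) (m : X → ℝ)
    (F : W → A → ℝ) :
    ∑ x, m x * F (f x) (g x) = ∑ w, ∑ a, jointMass f g m w a * F w a := by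
  have hpoint (x : X) : m x * F (f x) (g x) =
      ∑ w, ∑ a, (if f x = w ∧ g x = a then m x else 0) * F w a := by
    simp [ite_and]
  simp_rw [hpoint, jointMass, sum_mul]
  rw [sum_comm]
  exact sum_congr rfl fun w _ => sum_comm

end ConditionalMass

section LogScore

variable {X W A : Type*} [Fintype X]

/-- The expected logarithmic score, under the weights `m`, of the conditional prediction `r` of
`g` from `f`. -/
noncomputable def logScore (f : X → W) (g : X → A) (m : X → ℝ)
    (r : W → A → ℝ) : ℝ :=
  ∑ x, m x * log (r (f x) (g x))

variable [DecidableEq W] [Fintype A] [DecidableEq A]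
  {f : X → W} {m : X → ℝ} {q : W → A → ℝ}

lemma logScore_eq_sum_marginalMass_mul [Fintype W] (hf : ∀ w, 0 < marginalMass f m w) (g : X → A)
    (r : W → A → ℝ) :
    logScore f g m r = ∑ w, marginalMass f m w * ∑ a, condMass f g m w a * log (r w a) := by
  rw [logScore, sum_mul_comp_eq_sum_jointMass_mul f g m fun w a => log (r w a)]
  simp_rw [mul_sum, ← mul_assoc, marginalMass_mul_condMass (hf _).ne']

lemma logScore_le_logScore_condMass [Finite W] (hm : ∀ x, 0 ≤ m x)
    (hf : ∀ w, 0 < marginalMass f m w) (g : X → A) (hq : ∀ w a, 0 < q w a)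
    (hq1 : ∀ w, ∑ a, q w a ≤ 1) :
    logScore f g m q ≤ logScore f g m (condMass f g m) := by
  have := Fintype.ofFinite W
  simp only [logScore_eq_sum_marginalMass_mul hf]
  refine sum_le_sum fun w _ => mul_le_mul_of_nonneg_left ?_ (hf w).le
  exact sum_mul_log_le_sum_mul_log_self (condMass_nonneg hm f g w) (hq w)
    ((hq1 w).trans_eq (sum_condMass (hf w).ne' g).symm)

lemma logScore_eq_logScore_condMass_iff [Finite W] (hm : ∀ x, 0 ≤ m x)
    (hf : ∀ w, 0 < marginalMass f m w) (g : X → A) (hq : ∀ w a, 0 < q w a)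
    (hq1 : ∀ w, ∑ a, q w a ≤ 1) :
    logScore f g m q = logScore f g m (condMass f g m) ↔ q = condMass f g m := by
  have := Fintype.ofFinite W
  have hsum (w : W) : ∑ a, q w a ≤ ∑ a, condMass f g m w a :=
    (hq1 w).trans_eq (sum_condMass (hf w).ne' g).symm
  have hr (w : W) := condMass_nonneg hm f g w
  simp only [logScore_eq_sum_marginalMass_mul hf]
  rw [sum_eq_sum_iff_of_le fun w _ => mul_le_mul_of_nonneg_left
    (sum_mul_log_le_sum_mul_log_self (hr w) (hq w) (hsum w)) (hf w).le]
  simp only [mem_univ, forall_const, mul_right_inj' (hf _).ne',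
    sum_mul_log_eq_sum_mul_log_self_iff (hr _) (hq _) (hsum _), funext_iff]

end LogScore

section Autoregressive

variable {α : Type*} {n : ℕ}

/-- The prefix `x_{<i}` of a sequence. -/
def seqPrefix (i : Fin n) (x : Fin n → α) : Fin (i : ℕ) → α :=
  Fin.take i i.isLt.le x

lemma seqPrefix_surjective [Nonempty α] (i : Fin n) :
    Function.Surjective (seqPrefix (α := α) i) := fun w =>
  ⟨fun j => if h : (j : ℕ) < i then w ⟨j, h⟩ else Classical.arbitrary α,
    funext fun j => dif_pos j.isLt⟩

variable [Fintype α]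

/-- The mean over positions of the negative log-scores of the next-token predictions `r`, where
position `i` weights the sequences by `m i`. -/
noncomputable def autoregressiveLoss (m : Fin n → (Fin n → α) → ℝ)
    (r : (i : Fin n) → (Fin (i : ℕ) → α) → α → ℝ) : ℝ :=
  -(1 / (n : ℝ)) * ∑ i, logScore (seqPrefix i) (fun x => x i) (m i) (r i)

variable [DecidableEq α]

/-- The univariate conditionals of the weights `m` on sequences: the law of token `i` given the
prefix before it. -/
noncomputable def nextTokenCond (m : (Fin n → α) → ℝ) (i : Fin n) :
    (Fin (i : ℕ) → α) → α → ℝ :=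
  condMass (seqPrefix i) (fun x => x i) m

variable [Nonempty α] {m : Fin n → (Fin n → α) → ℝ}
  {q : (i : Fin n) → (Fin (i : ℕ) → α) → α → ℝ}

lemma logScore_le_logScore_nextTokenCond (hm : ∀ i x, 0 < m i x) (hq : ∀ i w a, 0 < q i w a)
    (hq1 : ∀ i w, ∑ a, q i w a ≤ 1) (i : Fin n) :
    logScore (seqPrefix i) (fun x => x i) (m i) (q i) ≤
      logScore (seqPrefix i) (fun x => x i) (m i) (nextTokenCond (m i) i) :=
  logScore_le_logScore_condMass (fun x => (hm i x).le)
    (fun w => marginalMass_pos (hm i) (seqPrefix_surjective i w)) _ (hq i) (hq1 i)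

theorem autoregressiveLoss_nextTokenCond_le (hm : ∀ i x, 0 < m i x) (hq : ∀ i w a, 0 < q i w a)
    (hq1 : ∀ i w, ∑ a, q i w a ≤ 1) :
    autoregressiveLoss m (fun i => nextTokenCond (m i) i) ≤ autoregressiveLoss m q :=
  mul_le_mul_of_nonpos_left
    (sum_le_sum fun i _ => logScore_le_logScore_nextTokenCond hm hq hq1 i)
    (neg_nonpos.2 (by positivity))

theorem autoregressiveLoss_eq_nextTokenCond_iff (hn : 1 ≤ n) (hm : ∀ i x, 0 < m i x)
    (hq : ∀ i w a, 0 < q i w a) (hq1 : ∀ i w, ∑ a, q i w a ≤ 1) :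
    autoregressiveLoss m q = autoregressiveLoss m (fun i => nextTokenCond (m i) i) ↔
      ∀ i, q i = nextTokenCond (m i) i := by
  have hcoeff : -(1 / (n : ℝ)) ≠ 0 := by
    have : n ≠ 0 := by omega
    simpa using this
  rw [autoregressiveLoss, autoregressiveLoss, mul_right_inj' hcoeff,
    sum_eq_sum_iff_of_le fun i _ => logScore_le_logScore_nextTokenCond hm hq hq1 i]
  simp only [mem_univ, forall_const]
  exact forall_congr' fun i => logScore_eq_logScore_condMass_iff (fun x => (hm i x).le)
    (fun w => marginalMass_pos (hm i) (seqPrefix_surjective i w)) _ (hq i) (hq1 i)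

end Autoregressive

section Temperature

variable {X : Type*} [Fintype X]

/-- The temperature-scaled distribution `p_T`. -/
noncomputable def tempered (p : X → ℝ) (T : ℝ) (x : X) : ℝ :=
  p x ^ (1 / T) / ∑ y, p y ^ (1 / T)

lemma sum_rpow_pos [Nonempty X] {p : X → ℝ} (hp : ∀ x, 0 < p x) (s : ℝ) : 0 < ∑ x, p x ^ s :=
  sum_pos (fun x _ => rpow_pos_of_pos (hp x) s) univ_nonempty

lemma mul_exp_log_sub_eq_rpow_mul_exp {t T : ℝ} (ht : 0 < t) (hT : T ≠ 0) (b : ℝ) :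
    t * exp ((1 - T) / T * log t - b) = t ^ (1 / T) * exp (-b) := by
  have hexponent : log t + ((1 - T) / T * log t - b) = log t * (1 / T) + -b := by
    field_simp
    ring
  calc t * exp ((1 - T) / T * log t - b)
      = exp (log t + ((1 - T) / T * log t - b)) := by rw [exp_add, exp_log ht]
    _ = t ^ (1 / T) * exp (-b) := by rw [hexponent, exp_add, rpow_def_of_pos ht]

end Temperature

section LHTS

variable {α : Type*} {n : ℕ} {p : (Fin n → α) → ℝ}

/-- The factor in front of `log q_i(x_i | x_{<i})` in the LHTS loss: the product of the probability
`p x`, the baseline factor `exp (-b'(i, x_{<i}))` and the weight `w_T(x)`. -/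
noncomputable def lhtsWeight (p : (Fin n → α) → ℝ) (T b : ℝ)
    (b' : (i : Fin n) → (Fin (i : ℕ) → α) → ℝ) (i : Fin n) (x : Fin n → α) : ℝ :=
  p x * exp (-(b' i (seqPrefix i x))) * exp ((1 - T) / T * log (p x) - b)

lemma lhtsWeight_pos (hp : ∀ x, 0 < p x) (T b : ℝ) (b' : (i : Fin n) → (Fin (i : ℕ) → α) → ℝ)
    (i : Fin n) (x : Fin n → α) : 0 < lhtsWeight p T b b' i x :=
  mul_pos (mul_pos (hp x) (exp_pos _)) (exp_pos _)

variable [Fintype α] [Nonempty α]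

lemma lhtsWeight_eq_tempered_mul (hp : ∀ x, 0 < p x) {T : ℝ} (hT : T ≠ 0) (b : ℝ)
    (b' : (i : Fin n) → (Fin (i : ℕ) → α) → ℝ) (i : Fin n) (x : Fin n → α) :
    lhtsWeight p T b b' i x =
      tempered p T x * ((∑ y, p y ^ (1 / T)) * exp (-b) * exp (-(b' i (seqPrefix i x)))) := by
  rw [lhtsWeight, mul_right_comm, mul_exp_log_sub_eq_rpow_mul_exp (hp x) hT, ← mul_assoc,
    ← mul_assoc, tempered, div_mul_cancel₀ _ (sum_rpow_pos hp _).ne']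

variable [DecidableEq α]

lemma nextTokenCond_lhtsWeight (hp : ∀ x, 0 < p x) {T : ℝ} (hT : T ≠ 0) (b : ℝ)
    (b' : (i : Fin n) → (Fin (i : ℕ) → α) → ℝ) (i : Fin n) :
    nextTokenCond (lhtsWeight p T b b' i) i = nextTokenCond (tempered p T) i := by
  let c (w : Fin (i : ℕ) → α) : ℝ := (∑ y, p y ^ (1 / T)) * exp (-b) * exp (-(b' i w))
  have hc (w : Fin (i : ℕ) → α) : c w ≠ 0 :=
    (mul_pos (mul_pos (sum_rpow_pos hp _) (exp_pos _)) (exp_pos _)).ne'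
  have hweight : lhtsWeight p T b b' i = fun x => tempered p T x * c (seqPrefix i x) :=
    funext fun x => lhtsWeight_eq_tempered_mul hp hT b b' i x
  rw [hweight]
  exact funext₂ fun w a => condMass_mul_comp _ _ _ (hc w) a

theorem lhts_autoregressive_strictly_proper_general (hn : 1 ≤ n) (p : (Fin n → α) → ℝ)
    (hp : ∀ x, 0 < p x) (T : ℝ) (hT : T ≠ 0) (b : ℝ)
    (b' : (i : Fin n) → (Fin (i : ℕ) → α) → ℝ)
    (q : (i : Fin n) → (Fin (i : ℕ) → α) → α → ℝ)
    (hq : ∀ i w a, 0 < q i w a) (hq1 : ∀ i w, ∑ a, q i w a ≤ 1) :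
    autoregressiveLoss (lhtsWeight p T b b') (nextTokenCond (tempered p T)) ≤
        autoregressiveLoss (lhtsWeight p T b b') q ∧
      (autoregressiveLoss (lhtsWeight p T b b') q =
          autoregressiveLoss (lhtsWeight p T b b') (nextTokenCond (tempered p T)) ↔
        ∀ i w a, q i w a = nextTokenCond (tempered p T) i w a) := by
  have hweight := lhtsWeight_pos hp T b b'
  have hle := autoregressiveLoss_nextTokenCond_le hweight hq hq1
  have hiff := autoregressiveLoss_eq_nextTokenCond_iff hn hweight hq hq1
  simp only [nextTokenCond_lhtsWeight hp hT, funext_iff] at hle hiff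
  exact ⟨hle, hiff⟩

end LHTS

/-- **Strict properness of the autoregressive LHTS loss (Proposition 1).**
Let `p` be a strictly positive joint pmf on sequences `x : Fin n → α` (`α` nonempty
finite, `n ≥ 1`), `T > 0`, `b ∈ ℝ`, and let `b'` be any finite-valued baseline on
prefixes. With `w_T(x) = exp(((1-T)/T)·log p x - b)`, the autoregressive LHTS loss
`L^{AR}(q) = -(1/n)·∑ i, ∑ x, p x · e^{-b'(i,x_{<i})} · w_T(x) · log (q i x_{<i} (x i))`
over families `q` of strictly positive conditional pmfs on `α` is uniquely globally
minimized at the family of univariate conditionals of the temperature-scaled joint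
distribution `p_T x = p x ^ (1/T) / ∑ y, p y ^ (1/T)`, namely
`p_T(a | w) = (∑_{x : x_{<i} = w, x i = a} p_T x) / (∑_{x : x_{<i} = w} p_T x)`. -/
theorem lhts_autoregressive_strictly_proper
    {α : Type*} [Fintype α] [Nonempty α] [DecidableEq α] {n : ℕ} (hn : 1 ≤ n)
    (p : (Fin n → α) → ℝ) (hp : ∀ x, 0 < p x) (hp1 : ∑ x, p x = 1)
    (T : ℝ) (hT : 0 < T) (b : ℝ)
    (b' : (i : Fin n) → (Fin (i : ℕ) → α) → ℝ)
    (q : (i : Fin n) → (Fin (i : ℕ) → α) → α → ℝ)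
    (hq : ∀ i w a, 0 < q i w a) (hq1 : ∀ i w, ∑ a, q i w a = 1) :
    let pref : (Fin n → α) → (i : Fin n) → Fin (i : ℕ) → α :=
      fun x i j => x ⟨(j : ℕ), lt_trans j.isLt i.isLt⟩
    let pT : (Fin n → α) → ℝ := fun x => p x ^ (1 / T) / ∑ y, p y ^ (1 / T)
    let pTcond : (i : Fin n) → (Fin (i : ℕ) → α) → α → ℝ := fun i w a =>
      (∑ x, if pref x i = w ∧ x i = a then pT x else 0) /
        (∑ x, if pref x i = w then pT x else 0)
    let L : ((i : Fin n) → (Fin (i : ℕ) → α) → α → ℝ) → ℝ := fun r =>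
      -(1 / (n : ℝ)) * ∑ i, ∑ x,
        p x * Real.exp (-(b' i (pref x i))) *
          Real.exp ((1 - T) / T * Real.log (p x) - b) *
          Real.log (r i (pref x i) (x i))
    L pTcond ≤ L q ∧ (L q = L pTcond ↔ ∀ i w a, q i w a = pTcond i w a) :=
  lhts_autoregressive_strictly_proper_general hn p hp T hT.ne' b b' q hq fun i w => (hq1 i w).le
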